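/- arXiv:2411.19201 — 3 statements merged into one kernel-verified Lean document; each statement's English description precedes it below -/
import Mathlib

section
/- Let M be a multiset of points in AG(2,q) having exactly k mod-special directions, with k ≥ 2. Then for every direction d ∈ 𝔽_q ∪ {∞}, the projection function pr_{M,d} has degree at most k − 2. -/
/-!
Write `ℓ_d(P)` for the parameter of the line of slope `d` through the point `P`, and `q = |F|`.
The polynomial `1 - ∑_{i<q} a^(q-1-i) X^i` represents the indicator function of `{a}` on `F`, so
for `1 ≤ j < q` the coefficient of `X^j` in the projection function of `M` from `d` is minus the
power sum `S_{q-1-j}(d)`, where `S_i(d) = ∑_{P ∈ M} ℓ_d(P)^i` (`coeff_prPoly`). A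
mod-equidistributed direction has a constant projection function, hence is a common zero of all
`S_i` with `i ≤ q - 2`.

On the other hand `S_i` is a binary form of degree `i` in the direction: it is a polynomial of
degree at most `i` in a finite slope, and its value at `∞` is the coefficient of degree `i`
(`powerSumPoly`). It vanishes at the `q + 1 - k` mod-equidistributed directions, so it is
identically zero when `i ≤ q - k` (`powerSum_eq_zero`). Thus the coefficients of `X^j` with
`k - 1 ≤ j < q` vanish in every projection function.
-/

attribute [local instance] Classical.propDecidable

noncomputable section

open Polynomial

variable {F : Type} [Field F]

/-- Point `P` of `AG(2,q)` lies on the line with slope `d` (`none` stands for slope `∞`)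
and parameter `b`. -/
def onAffLine (d : Option F) (b : F) (P : F × F) : Prop :=
  match d with
  | some m => P.2 = m * P.1 + b
  | none => P.1 + b = 0

/-- Number of points of the multiset `M` (counted with multiplicity) on the line with
slope `d` and parameter `b`. -/
def lineCount (M : Multiset (F × F)) (d : Option F) (b : F) : ℕ :=
  Multiset.countP (onAffLine d b) M

/-- `d` is a mod-special direction of `M` (w.r.t. the prime `p`). -/
def IsModSpecial (p : ℕ) (M : Multiset (F × F)) (d : Option F) : Prop :=
  ¬ ∀ b₁ b₂ : F, (lineCount M d b₁ : ZMod p) = (lineCount M d b₂ : ZMod p)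

/-- `d` is a special direction of `M`: some line with slope `d` contains neither
`⌊|M|/q⌋` nor `⌈|M|/q⌉` points of `M`. -/
def IsSpecial [Fintype F] (M : Multiset (F × F)) (d : Option F) : Prop :=
  ¬ ∀ b : F, lineCount M d b = Multiset.card M / Fintype.card F ∨
      lineCount M d b = (Multiset.card M + Fintype.card F - 1) / Fintype.card F

/-- The multiset of the `q` points of an affine line, each with multiplicity one. -/
def affLine [Fintype F] (d : Option F) (b : F) : Multiset (F × F) :=
  (Finset.univ.filter (onAffLine d b)).val

/-- The projection function of `M` from direction `d`: the unique polynomial of degree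
at most `q - 1` whose value at each `b` is the number of points of `M` on the
corresponding line reduced modulo `p` (viewed in the prime subfield of `F`). -/
def prPoly [Fintype F] (M : Multiset (F × F)) (d : Option F) : F[X] :=
  Lagrange.interpolate Finset.univ id (fun b => (lineCount M d b : F))

/-- The parameter `b` of the line with slope `d` through `P`. -/
def lineParam (d : Option F) (P : F × F) : F :=
  match d with
  | some m => P.2 - m * P.1
  | none => -P.1

lemma onAffLine_iff (d : Option F) (b : F) (P : F × F) :
    onAffLine d b P ↔ b = lineParam d P := by
  cases d with
  | none => simp only [onAffLine, lineParam]; grind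
  | some m => simp only [onAffLine, lineParam]; grind

/-- The power sum `∑_{P ∈ M} ℓ_d(P)^i`, where `ℓ_d` is `lineParam d`. -/
def powerSum (M : Multiset (F × F)) (i : ℕ) (d : Option F) : F :=
  (M.map fun P => lineParam d P ^ i).sum

/-- The power sum `powerSum M i (some m)` as a polynomial in the finite slope `m`. -/
def powerSumPoly (M : Multiset (F × F)) (i : ℕ) : F[X] :=
  (M.map fun P => (C P.2 - C P.1 * X) ^ i).sum

lemma eval_powerSumPoly (M : Multiset (F × F)) (i : ℕ) (m : F) :
    (powerSumPoly M i).eval m = powerSum M i (some m) := by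
  induction M using Multiset.induction with
  | empty => simp [powerSumPoly, powerSum]
  | cons P M ih =>
    simp only [powerSumPoly, powerSum, Multiset.map_cons, Multiset.sum_cons, eval_add] at ih ⊢
    rw [ih]
    simp only [lineParam, eval_pow, eval_sub, eval_mul, eval_C, eval_X, mul_comm m]

lemma natDegree_linear_le (P : F × F) : (C P.2 - C P.1 * X : F[X]).natDegree ≤ 1 := by
  compute_degree

lemma degree_powerSumPoly_le (M : Multiset (F × F)) (i : ℕ) :
    (powerSumPoly M i).degree ≤ i := by
  induction M using Multiset.induction with
  | empty => simp [powerSumPoly]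
  | cons P M ih =>
    simp only [powerSumPoly, Multiset.map_cons, Multiset.sum_cons] at ih ⊢
    refine (degree_add_le _ _).trans (max_le ?_ ih)
    refine degree_le_of_natDegree_le ?_
    simpa using natDegree_pow_le_of_le i (natDegree_linear_le P)

/-- The coefficient of degree `i` is the value of the power sum at the infinite slope. -/
lemma coeff_powerSumPoly (M : Multiset (F × F)) (i : ℕ) :
    (powerSumPoly M i).coeff i = powerSum M i none := by
  induction M using Multiset.induction with
  | empty => simp [powerSumPoly, powerSum]
  | cons P M ih =>
    simp only [powerSumPoly, powerSum, Multiset.map_cons, Multiset.sum_cons, coeff_add] at ih ⊢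
    rw [ih]
    have h := coeff_pow_of_natDegree_le (m := i) (natDegree_linear_le P)
    rw [mul_one] at h
    simp [h, lineParam]

/-- A power sum of exponent `i` with more than `i` zeros among the directions is
identically zero. -/
lemma powerSum_eq_zero (M : Multiset (F × F)) (i : ℕ) (s : Finset (Option F))
    (hs : ∀ d ∈ s, powerSum M i d = 0) (hi : i < s.card) (d : Option F) :
    powerSum M i d = 0 := by
  have hzero : powerSumPoly M i = 0 := by
    refine eq_zero_of_degree_lt_of_eval_finset_eq_zero (Finset.eraseNone s) ?_ ?_
    · by_cases hn : none ∈ s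
      · -- A zero at infinity lowers the degree, which compensates for the lost finite zero.
        have hc : i ≤ (Finset.eraseNone s).card := by
          have := Finset.card_eraseNone_of_mem hn
          omega
        have hlt : (powerSumPoly M i).degree < i := by
          refine lt_of_le_of_ne (degree_powerSumPoly_le M i) fun he => ?_
          exact coeff_ne_zero_of_eq_degree he ((coeff_powerSumPoly M i).trans (hs none hn))
        exact hlt.trans_le (by exact_mod_cast hc)
      · rw [Finset.card_eraseNone_of_not_mem hn]
        exact (degree_powerSumPoly_le M i).trans_lt (by exact_mod_cast hi)
    · intro m hm
      rw [eval_powerSumPoly]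
      exact hs _ (Finset.mem_eraseNone.1 hm)
  cases d with
  | none => rw [← coeff_powerSumPoly, hzero, coeff_zero]
  | some m => rw [← eval_powerSumPoly, hzero, eval_zero]

/-- A polynomial of degree at most `q - 1` representing the indicator function of `{a}`. -/
def pointPoly (F : Type) [Field F] [Fintype F] (a : F) : F[X] :=
  1 - ∑ i ∈ Finset.range (Fintype.card F), C (a ^ (Fintype.card F - 1 - i)) * X ^ i

lemma eval_pointPoly [Fintype F] (a b : F) :
    (pointPoly F a).eval b = if b = a then 1 else 0 := by
  have hg := Commute.geom_sum₂_mul (Commute.all b a) (Fintype.card F)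
  rw [FiniteField.pow_card, FiniteField.pow_card] at hg
  have he : (pointPoly F a).eval b =
      1 - ∑ i ∈ Finset.range (Fintype.card F), b ^ i * a ^ (Fintype.card F - 1 - i) := by
    simp [pointPoly, eval_finsetSum, mul_comm]
  rw [he]
  split_ifs with hab
  · -- All `q` summands are equal to `a ^ (q - 1)`, and `q = 0` in `F`.
    subst hab
    have : ∀ i ∈ Finset.range (Fintype.card F),
        b ^ i * b ^ (Fintype.card F - 1 - i) = b ^ (Fintype.card F - 1) := by
      intro i hi
      rw [← pow_add]
      congr 1
      have := Finset.mem_range.1 hi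
      omega
    rw [Finset.sum_congr rfl this]
    simp
  · have := mul_right_cancel₀ (sub_ne_zero.2 hab) (hg.trans (one_mul _).symm)
    rw [this, sub_self]

lemma degree_pointPoly_lt [Fintype F] (a : F) :
    (pointPoly F a).degree < Fintype.card F := by
  refine (degree_sub_le _ _).trans_lt (max_lt ?_ ?_)
  · exact degree_one_le.trans_lt (by exact_mod_cast Fintype.card_pos)
  · refine (degree_sum_le _ _).trans_lt ?_
    rw [Finset.sup_lt_iff (WithBot.bot_lt_coe _)]
    intro i hi
    exact (degree_C_mul_X_pow_le _ _).trans_lt (by exact_mod_cast Finset.mem_range.1 hi)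

lemma coeff_pointPoly [Fintype F] (a : F) {j : ℕ} (hj : 1 ≤ j) (hjq : j < Fintype.card F) :
    (pointPoly F a).coeff j = -a ^ (Fintype.card F - 1 - j) := by
  have : j ≠ 0 := by omega
  simp only [pointPoly, coeff_sub, coeff_one, finsetSum_coeff, coeff_C_mul, coeff_X_pow]
  simp [this, hjq]

lemma prPoly_eq_sum [Fintype F] (M : Multiset (F × F)) (d : Option F) :
    prPoly M d = (M.map fun P => pointPoly F (lineParam d P)).sum := by
  induction M using Multiset.induction with
  | empty =>
    have : (fun b : F => ((lineCount 0 d b : ℕ) : F)) = 0 := by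
      funext b
      simp [lineCount]
    rw [prPoly, this]
    simp
  | cons P M ih =>
    have hfun : (fun b : F => ((lineCount (P ::ₘ M) d b : ℕ) : F)) =
        (fun b => if b = lineParam d P then 1 else 0) + fun b => ((lineCount M d b : ℕ) : F) := by
      funext b
      simp only [lineCount, Multiset.countP_cons, onAffLine_iff, Pi.add_apply]
      push_cast
      ring
    have hpt : pointPoly F (lineParam d P) = Lagrange.interpolate Finset.univ id
        (fun b => if b = lineParam d P then (1 : F) else 0) := by
      refine Lagrange.eq_interpolate_of_eval_eq _ Function.injective_id.injOn ?_ ?_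
      · simpa using degree_pointPoly_lt (lineParam d P)
      · intro b _
        exact eval_pointPoly _ _
    rw [Multiset.map_cons, Multiset.sum_cons, ← ih, hpt, prPoly, hfun, map_add]
    rfl

lemma coeff_prPoly [Fintype F] (M : Multiset (F × F)) (d : Option F) {j : ℕ} (hj : 1 ≤ j)
    (hjq : j < Fintype.card F) :
    (prPoly M d).coeff j = -powerSum M (Fintype.card F - 1 - j) d := by
  rw [prPoly_eq_sum]
  induction M using Multiset.induction with
  | empty => simp [powerSum]
  | cons P M ih =>
    simp only [powerSum, Multiset.map_cons, Multiset.sum_cons, coeff_add] at ih ⊢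
    rw [ih, coeff_pointPoly _ hj hjq]
    ring

/-- The projection function from a mod-equidistributed direction is constant. -/
lemma coeff_prPoly_of_not_isModSpecial (p : ℕ) [Fintype F] [CharP F p] (M : Multiset (F × F))
    (d : Option F) (hd : ¬ IsModSpecial p M d) {j : ℕ} (hj : 1 ≤ j) :
    (prPoly M d).coeff j = 0 := by
  have hconst : prPoly M d = C ((lineCount M d 0 : ℕ) : F) := by
    symm
    refine Lagrange.eq_interpolate_of_eval_eq _ Function.injective_id.injOn ?_ ?_
    · refine degree_C_le.trans_lt ?_
      exact_mod_cast Finset.card_pos.2 Finset.univ_nonempty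
    · intro b _
      rw [eval_C, CharP.natCast_eq_natCast F p, ← ZMod.natCast_eq_natCast_iff]
      exact not_not.1 hd 0 b
  rw [hconst, coeff_C, if_neg (by omega)]

theorem stmt0 (p h : ℕ) [Fact p.Prime] (hh : 1 ≤ h)
    (F : Type) [Field F] [Fintype F] [CharP F p] (hcard : Fintype.card F = p ^ h)
    (M : Multiset (F × F)) (k : ℕ) (hk : 2 ≤ k)
    (hknum : (Finset.univ.filter (fun d : Option F => IsModSpecial p M d)).card = k) :
    ∀ d : Option F, (prPoly M d).degree ≤ ((k - 2 : ℕ) : WithBot ℕ) := by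
  intro d
  rw [degree_le_iff_coeff_zero]
  intro j hj
  have hj : k - 2 < j := by exact_mod_cast hj
  by_cases hjq : j < Fintype.card F
  · rw [coeff_prPoly M d (by omega) hjq, neg_eq_zero]
    refine powerSum_eq_zero M _ (Finset.univ.filter fun d : Option F => ¬ IsModSpecial p M d)
      ?_ ?_ d
    · intro e he
      have h0 := coeff_prPoly_of_not_isModSpecial p M e (Finset.mem_filter.1 he).2
        (j := j) (by omega)
      rwa [coeff_prPoly M e (by omega) hjq, neg_eq_zero] at h0
    · have hsum := Finset.card_filter_add_card_filter_not (s := (Finset.univ : Finset (Option F)))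
        (fun d => IsModSpecial p M d)
      rw [hknum, Finset.card_univ, Fintype.card_option] at hsum
      omega
  · refine coeff_eq_zero_of_degree_lt ?_
    have hlt := Lagrange.degree_interpolate_lt (s := (Finset.univ : Finset F))
      (fun b => ((lineCount M d b : ℕ) : F)) Function.injective_id.injOn
    refine hlt.trans_le ?_
    rw [Finset.card_univ]
    exact_mod_cast not_lt.1 hjq

end
end

section
/- If M is a multiset of size nq in AG(2,q) admitting exactly one special direction d₀, then M is the union of n (not necessarily distinct) parallel lines with slope d₀; that is, M equals, as a multiset, a sum of n multisets each consisting of all q points of an affine line with slope d₀ taken with multiplicity one. -/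
/-!
The proof is a double count of the lines through a point `P`. The `q + 1` lines through `P` cover
`P` itself `q + 1` times and every other point exactly once, so the numbers of points of `M` on
them add up to `|M| + q * m(P)`, where `m(P)` is the multiplicity of `P` in `M`
(`sum_lineCount`). As `q` divides `|M| = n * q`, each of the `q` lines through `P` in an
equidistributed direction has exactly `n` points, hence the remaining line, of slope `d₀`, has
`q * m(P)` points. Thus `m` is constant on every line of slope `d₀`, and `M` is the sum of these
lines, each repeated as often as the common multiplicity of its points.
-/

attribute [local instance] Classical.propDecidable

noncomputable section

open Polynomial

variable {F : Type} [Field F]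

/-- A chosen point on the line of slope `d` and parameter `b`. -/
def linePoint (d : Option F) (b : F) : F × F :=
  match d with
  | some _ => (0, b)
  | none => (-b, 0)

lemma lineParam_linePoint (d : Option F) (b : F) : lineParam d (linePoint d b) = b := by
  cases d <;> simp [lineParam, linePoint]

lemma lineCount_cons (Q : F × F) (M : Multiset (F × F)) (d : Option F) (b : F) :
    lineCount (Q ::ₘ M) d b = lineCount M d b + if b = lineParam d Q then 1 else 0 := by
  simp only [lineCount, Multiset.countP_cons, onAffLine_iff]

/-- Two distinct points are joined by exactly one line. -/
lemma exists_direction {P Q : F × F} (hPQ : P ≠ Q) :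
    ∃ d : Option F, ∀ e : Option F, lineParam e P = lineParam e Q ↔ e = d := by
  obtain ⟨a, b⟩ := P
  obtain ⟨c, d⟩ := Q
  by_cases hac : a = c
  · refine ⟨none, fun e => ?_⟩
    cases e with
    | none => simp [lineParam, hac]
    | some m => simp [lineParam, hac]; grind
  · have hne : a - c ≠ 0 := sub_ne_zero.mpr hac
    refine ⟨some ((b - d) / (a - c)), fun e => ?_⟩
    cases e with
    | none => simp [lineParam, hac]
    | some m =>
      simp only [lineParam, Option.some.injEq, eq_div_iff hne]
      grind

/-- The number of points of `M` on the `q + 1` lines through `P`, added up. -/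
lemma sum_lineCount [Fintype F] (M : Multiset (F × F)) (P : F × F) :
    ∑ d : Option F, lineCount M d (lineParam d P) =
      Multiset.card M + Fintype.card F * M.count P := by
  induction M using Multiset.induction_on with
  | empty => simp [lineCount]
  | cons Q M ih =>
    simp only [lineCount_cons, Finset.sum_add_distrib, ih, Multiset.card_cons,
      Multiset.count_cons]
    by_cases hPQ : P = Q
    · subst hPQ
      simp
      ring
    · obtain ⟨d, hd⟩ := exists_direction hPQ
      simp [hd, hPQ]
      ring

/-- The lines of a fixed slope partition the plane. -/
lemma sum_lineCount_slope [Fintype F] (M : Multiset (F × F)) (d : Option F) :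
    ∑ b : F, lineCount M d b = Multiset.card M := by
  induction M using Multiset.induction_on with
  | empty => simp [lineCount]
  | cons Q M ih => simp [lineCount_cons, Finset.sum_add_distrib, ih]

lemma count_sum_affLine [Fintype F] (B : Multiset F) (d : Option F) (P : F × F) :
    (B.map (fun b => affLine d b)).sum.count P = B.count (lineParam d P) := by
  induction B using Multiset.induction_on with
  | empty => simp
  | cons b B ih =>
    have h1 : (affLine d b).count P = if lineParam d P = b then 1 else 0 := by
      rw [affLine, Multiset.count_eq_of_nodup (Finset.nodup _)]
      simp [onAffLine_iff, eq_comm]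
    rw [Multiset.map_cons, Multiset.sum_cons, Multiset.count_add, ih, h1, Multiset.count_cons,
      add_comm]

theorem stmt4 (p h n : ℕ) [Fact p.Prime] (hh : 1 ≤ h)
    (F : Type) [Field F] [Fintype F] [CharP F p] (hcard : Fintype.card F = p ^ h)
    (M : Multiset (F × F)) (hM : Multiset.card M = n * Fintype.card F)
    (d₀ : Option F) (hspec : ∀ d : Option F, IsSpecial M d ↔ d = d₀) :
    ∃ B : Multiset F, Multiset.card B = n ∧ M = (B.map (fun b => affLine d₀ b)).sum := by
  have hq : 0 < Fintype.card F := Fintype.card_pos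
  have hline : ∀ d, d ≠ d₀ → ∀ b, lineCount M d b = n := by
    intro d hd b
    have h1 := (hspec d).not.mpr hd
    rw [IsSpecial, not_not] at h1
    -- Both bounds `⌊|M|/q⌋` and `⌈|M|/q⌉` equal `n`.
    have hfloor : Multiset.card M / Fintype.card F = n := by
      rw [hM, Nat.mul_div_cancel _ hq]
    have hceil : (Multiset.card M + Fintype.card F - 1) / Fintype.card F = n := by
      rw [hM, Nat.add_sub_assoc hq, mul_comm, Nat.mul_add_div hq,
        Nat.div_eq_of_lt (by omega), add_zero]
    rcases h1 b with h2 | h2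
    · rw [h2, hfloor]
    · rw [h2, hceil]
  have hkey : ∀ P, lineCount M d₀ (lineParam d₀ P) = Fintype.card F * M.count P := by
    intro P
    have h1 := sum_lineCount M P
    rw [← Finset.add_sum_erase _ _ (Finset.mem_univ d₀),
      Finset.sum_congr rfl (fun d hd => hline d (Finset.ne_of_mem_erase hd) _),
      Finset.sum_const, Finset.card_erase_of_mem (Finset.mem_univ _), Finset.card_univ,
      Fintype.card_option, Nat.add_sub_cancel, hM, smul_eq_mul, mul_comm n] at h1
    omega
  let B : Multiset F := ∑ b : F, Multiset.replicate (M.count (linePoint d₀ b)) b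
  have hcount : ∀ b, B.count b = M.count (linePoint d₀ b) := by
    intro b
    simp [B, Multiset.count_sum', Multiset.count_replicate]
  refine ⟨B, ?_, ?_⟩
  · have h1 := sum_lineCount_slope M d₀
    have h2 : ∀ b, lineCount M d₀ b = Fintype.card F * M.count (linePoint d₀ b) := by
      intro b
      rw [← hkey, lineParam_linePoint]
    rw [Finset.sum_congr rfl (fun b _ => h2 b), ← Finset.mul_sum, hM, mul_comm n] at h1
    rw [← Nat.eq_of_mul_eq_mul_left hq h1]
    simp [B]
  · ext P
    rw [count_sum_affLine, hcount]
    apply Nat.eq_of_mul_eq_mul_left hq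
    rw [← hkey, ← hkey, lineParam_linePoint]

end
end

section
/- Consider a multiset M of points in AG(2,q). Suppose that the direction (∞) is mod-special, and let E ⊆ 𝔽_q denote the set of mod-equidistributed directions of M; for each e ∈ E let r_e ∈ 𝔽_p be the common value modulo p of the number of points of M on each line of slope e. Define the polynomial F_M(T,D,B) = Σ_{(x,y)∈M} (1 − (yT − (Dx + B))^{q−1}) − Σ_{e∈E} r_e·(1 − (D − eT)^{q−1}) in 𝔽_q[T,D,B] (the first sum counted with multiplicity). Then for all d, b ∈ 𝔽_q: F_M(1,d,b) = pr_{M,d}(b) if d ∉ E and F_M(1,d,b) = 0 if d ∈ E; moreover F_M(0,1,b) = pr_{M,∞}(b). -/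
/-!
Since `a ^ (q - 1)` is `1` for `a ≠ 0` and `0` for `a = 0`, each summand `1 - f ^ (q - 1)` is the
indicator of `f = 0` (`one_sub_pow_card_sub_one`). At `(1, d, b)` the form `y T - (D x + B)` vanishes
exactly when `(x, y)` lies on the line `y = d x + b`, and at `(0, 1, b)` exactly when `x + b = 0`, so
the first sum is the number of points of `M` on that line (`sum_eq_lineCount`), which is the value of
the projection function there. In the second sum, `1 - (D - e T) ^ (q - 1)` is the indicator of
`d = e` at `(1, d, b)`, so the sum is `r d` for `d ∈ E` and `0` otherwise; at `(0, 1, b)` every term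
is `1 - 1 = 0`.
-/

attribute [local instance] Classical.propDecidable

noncomputable section

open Polynomial

variable {F : Type} [Field F]

/-- `1 - a ^ (q - 1)` is the indicator function of `a = 0` on a field with `q` elements. -/
theorem one_sub_pow_card_sub_one {F : Type} [Field F] [Fintype F] (a : F) :
    1 - a ^ (Fintype.card F - 1) = if a = 0 then 1 else 0 := by
  split_ifs with ha
  · have hq : Fintype.card F - 1 ≠ 0 := by
      have := Fintype.one_lt_card (α := F)
      omega
    rw [ha, zero_pow hq, sub_zero]
  · rw [FiniteField.pow_card_sub_one_eq_one a ha, sub_self]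

theorem prPoly_eval {F : Type} [Field F] [Fintype F] (M : Multiset (F × F)) (d : Option F)
    (b : F) : (prPoly M d).eval b = (lineCount M d b : F) :=
  Lagrange.eval_interpolate_at_node (v := id) _ (Function.injective_id.injOn)
    (Finset.mem_univ b)

/-- If `f` vanishes exactly on the line with slope `d` and parameter `b`, then the sum of
`1 - f ^ (q - 1)` over `M` counts the points of `M` on that line. -/
theorem sum_eq_lineCount {F : Type} [Field F] [Fintype F] (M : Multiset (F × F))
    (d : Option F) (b : F) (f : F × F → F) (hf : ∀ P, f P = 0 ↔ onAffLine d b P) :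
    (M.map (fun P => 1 - f P ^ (Fintype.card F - 1))).sum = (lineCount M d b : F) := by
  unfold lineCount
  induction M using Multiset.induction_on with
  | empty => simp
  | cons P M ih =>
    rw [Multiset.map_cons, Multiset.sum_cons, ih, one_sub_pow_card_sub_one,
      Multiset.countP_cons]
    by_cases hP : onAffLine d b P
    · rw [if_pos ((hf P).2 hP), if_pos hP]
      push_cast
      ring
    · rw [if_neg (fun h => hP ((hf P).1 h)), if_neg hP]
      push_cast
      ring

theorem stmt10 (p h : ℕ) [Fact p.Prime] (hh : 1 ≤ h)
    (F : Type) [Field F] [Fintype F] [CharP F p] (hcard : Fintype.card F = p ^ h)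
    (M : Multiset (F × F)) (hinf : IsModSpecial p M none)
    (E : Finset F) (hE : ∀ e : F, e ∈ E ↔ ¬ IsModSpecial p M (some e))
    (r : F → F) (hr : ∀ e ∈ E, ∀ b : F, (lineCount M (some e) b : F) = r e) :
    let q := Fintype.card F
    let FM : MvPolynomial (Fin 3) F :=
      (M.map (fun xy => (1 : MvPolynomial (Fin 3) F) -
          (MvPolynomial.C xy.2 * MvPolynomial.X 0 -
            (MvPolynomial.X 1 * MvPolynomial.C xy.1 + MvPolynomial.X 2)) ^ (q - 1))).sum -
        ∑ e ∈ E, MvPolynomial.C (r e) *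
          (1 - (MvPolynomial.X 1 - MvPolynomial.C e * MvPolynomial.X 0) ^ (q - 1))
    (∀ d b : F,
        (d ∉ E → MvPolynomial.eval ![1, d, b] FM = (prPoly M (some d)).eval b) ∧
        (d ∈ E → MvPolynomial.eval ![1, d, b] FM = 0)) ∧
      ∀ b : F, MvPolynomial.eval ![0, 1, b] FM = (prPoly M none).eval b := by
  intro q FM
  -- The value of `FM` at an arbitrary point `(t, d, b)`.
  have key : ∀ t d b : F, MvPolynomial.eval ![t, d, b] FM =
      (M.map (fun P : F × F => 1 - (P.2 * t - (d * P.1 + b)) ^ (Fintype.card F - 1))).sum -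
        ∑ e ∈ E, r e * (1 - (d - e * t) ^ (Fintype.card F - 1)) := by
    intro t d b
    simp only [FM, q, map_sub, map_multiset_sum, Multiset.map_map, map_sum, map_mul,
      MvPolynomial.eval_C, map_one, map_pow, MvPolynomial.eval_X, Function.comp_def, map_add]
    simp
  have hone : ∀ d b : F, MvPolynomial.eval ![1, d, b] FM =
      (lineCount M (some d) b : F) - if d ∈ E then r d else 0 := by
    intro d b
    rw [key, sum_eq_lineCount M (some d) b]
    · congr 1
      simp only [one_sub_pow_card_sub_one, mul_one, sub_eq_zero, mul_ite, mul_zero]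
      simp
    · intro P
      simp [onAffLine, sub_eq_zero]
  refine ⟨fun d b => ⟨fun hd => ?_, fun hd => ?_⟩, fun b => ?_⟩
  · rw [hone, if_neg hd, sub_zero, prPoly_eval]
  · rw [hone, if_pos hd, hr d hd b, sub_self]
  · rw [key, sum_eq_lineCount M none b, prPoly_eval]
    · simp
    · intro P
      rw [mul_zero, one_mul, zero_sub, neg_eq_zero]
      rfl

end
end
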